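/- Let H be a complex Hilbert space, S ⊆ H a dense subspace, and d, δ : S → H linear maps with d(S) ⊆ S, d(d x) = 0 for all x ∈ S, and ⟪d x, y⟫ = ⟪x, δ y⟫ for all x, y ∈ S. Assume ‖x‖² ≤ ‖d x‖² + ‖δ x‖² for all x ∈ S, and that P := d + δ (with domain S) is essentially self-adjoint. Then H decomposes orthogonally as H = Ran(d_min) ⊕ Ran(δ_min): every α ∈ H can be written α = d_min u + δ_min v with u ∈ dom(d_min) and v ∈ dom(δ_min), and moreover ⟪d_min u, δ_min v⟫ = 0 for all u ∈ dom(d_min) and v ∈ dom(δ_min). -/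

import Mathlib

/-!
Since `d² = 0` and `d` maps `S` into `S`, the ranges of `d` and `δ` on `S` are orthogonal, and so
are their closures. Hence, for `P = d + δ`, Pythagoras gives `‖P x‖² = ‖d x‖² + ‖δ x‖²`. Together
with the Weitzenböck-type inequality this shows `‖x‖ ≤ ‖P x‖` on `S`.

The range of `P` is dense: a vector `z` orthogonal to it lies in the domain of `P*`, hence in that
of the closure of `P`, and by symmetry of `P` its image there is orthogonal to `S`, so it vanishes;
the lower bound `‖x‖ ≤ ‖P x‖` then forces `z = 0`. Finally, if `P uₙ → α`, the same estimates make
`uₙ`, `d uₙ` and `δ uₙ` Cauchy, and their limits `u`, `x`, `y` satisfy `α = x + y` with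
`x = d_min u` and `y = δ_min u`.
-/

open scoped ComplexInnerProductSpace
open Filter

/-- `(x, y)` belongs to the graph of the minimal (closed) extension of `T` : there is a
sequence in `S` converging to `x` whose image under `T` converges to `y`. -/
def InMinGraph {H : Type*} [NormedAddCommGroup H] [InnerProductSpace ℂ H]
    (S : Submodule ℂ H) (T : S →ₗ[ℂ] H) (x y : H) : Prop :=
  ∃ u : ℕ → S, Tendsto (fun n => (u n : H)) atTop (nhds x) ∧
    Tendsto (fun n => T (u n)) atTop (nhds y)

/-- `x` belongs to the domain of the adjoint `T*` : the functional
`y ↦ ⟪x, T y⟫` is bounded on `S`. -/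
def InAdjointDomain {H : Type*} [NormedAddCommGroup H] [InnerProductSpace ℂ H]
    (S : Submodule ℂ H) (T : S →ₗ[ℂ] H) (x : H) : Prop :=
  ∃ C : ℝ, ∀ y : S, ‖⟪x, T y⟫‖ ≤ C * ‖(y : H)‖

/-- A linear map dominated in norm by another one sends a sequence to a convergent sequence as soon
as the dominating map does. -/
lemma exists_tendsto_of_norm_le {E F : Type*} [NormedAddCommGroup E] [InnerProductSpace ℂ E]
    [NormedAddCommGroup F] [InnerProductSpace ℂ F] [CompleteSpace F] {S : Submodule ℂ E}
    (A : S →ₗ[ℂ] F) (B : S →ₗ[ℂ] F) (hAB : ∀ x, ‖A x‖ ≤ ‖B x‖) (u : ℕ → S) {b : F}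
    (hb : Tendsto (fun n => B (u n)) atTop (nhds b)) :
    ∃ a, Tendsto (fun n => A (u n)) atTop (nhds a) := by
  apply cauchySeq_tendsto_of_complete
  have hc := hb.cauchySeq
  rw [Metric.cauchySeq_iff] at hc ⊢
  intro ε hε
  obtain ⟨N, hN⟩ := hc ε hε
  refine ⟨N, fun m hm n hn => lt_of_le_of_lt ?_ (hN m hm n hn)⟩
  rw [dist_eq_norm, dist_eq_norm, ← map_sub, ← map_sub]
  exact hAB _

/-- Abstract Hodge decomposition : under the Weitzenböck-type inequality and
essential self-adjointness of `P = d + δ`, the Hilbert space decomposes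
orthogonally as `H = Ran(d_min) ⊕ Ran(δ_min)`. -/
theorem orthogonal_decomposition_ran_dmin_ran_deltamin
    {H : Type*} [NormedAddCommGroup H] [InnerProductSpace ℂ H] [CompleteSpace H]
    (S : Submodule ℂ H) (hS : Dense (S : Set H))
    (d δ : S →ₗ[ℂ] H)
    (hdS : ∀ x : S, d x ∈ S)
    (hdd : ∀ x : S, d ⟨d x, hdS x⟩ = 0)
    (hadj : ∀ x y : S, ⟪d x, (y : H)⟫ = ⟪(x : H), δ y⟫)
    (hineq : ∀ x : S, ‖(x : H)‖ ^ 2 ≤ ‖d x‖ ^ 2 + ‖δ x‖ ^ 2)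
    (hesa : ∀ x : H, InAdjointDomain S (d + δ) x →
      ∃ y : H, InMinGraph S (d + δ) x y) :
    (∀ α : H, ∃ u v x y : H, InMinGraph S d u x ∧ InMinGraph S δ v y ∧ α = x + y)
    ∧ (∀ u v x y : H, InMinGraph S d u x → InMinGraph S δ v y → ⟪x, y⟫ = 0) := by
  have hadj' : ∀ x y : S, ⟪δ x, (y : H)⟫ = ⟪(x : H), d y⟫ := fun x y => by
    rw [← inner_conj_symm, ← hadj, inner_conj_symm]
  have horth : ∀ x y : S, ⟪d x, δ y⟫ = 0 := fun x y => by
    have h := hadj ⟨d x, hdS x⟩ y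
    rw [hdd, inner_zero_left] at h
    exact h.symm
  have hpyth : ∀ x : S, ‖(d + δ) x‖ ^ 2 = ‖d x‖ ^ 2 + ‖δ x‖ ^ 2 := fun x => by
    rw [LinearMap.add_apply, sq, sq, sq]
    exact norm_add_sq_eq_norm_sq_add_norm_sq_of_inner_eq_zero _ _ (horth x x)
  have hd_le : ∀ x : S, ‖d x‖ ≤ ‖(d + δ) x‖ := fun x =>
    le_of_sq_le_sq (by nlinarith [hpyth x, sq_nonneg ‖δ x‖]) (norm_nonneg _)
  have hδ_le : ∀ x : S, ‖δ x‖ ≤ ‖(d + δ) x‖ := fun x =>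
    le_of_sq_le_sq (by nlinarith [hpyth x, sq_nonneg ‖d x‖]) (norm_nonneg _)
  have hid_le : ∀ x : S, ‖S.subtype x‖ ≤ ‖(d + δ) x‖ := fun x =>
    le_of_sq_le_sq (by rw [hpyth x]; exact hineq x) (norm_nonneg _)
  have hsymm : ∀ x y : S, ⟪(d + δ) x, (y : H)⟫ = ⟪(x : H), (d + δ) y⟫ := fun x y => by
    rw [LinearMap.add_apply, LinearMap.add_apply, inner_add_left, inner_add_right, hadj, hadj',
      add_comm]
  have hdense : (LinearMap.range (d + δ)).topologicalClosure = ⊤ := by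
    rw [Submodule.topologicalClosure_eq_top_iff, Submodule.eq_bot_iff]
    intro z hz
    have hz0 : ∀ w : S, ⟪z, (d + δ) w⟫ = 0 := fun w =>
      Submodule.inner_left_of_mem_orthogonal (LinearMap.mem_range_self _ w) hz
    obtain ⟨y, u, hu, hPu⟩ := hesa z ⟨0, fun w => by rw [hz0, norm_zero, zero_mul]⟩
    have hy : y = 0 := by
      refine hS.eq_zero_of_inner_left (𝕜 := ℂ) fun w hw => ?_
      lift w to S using hw
      have h1 := hPu.inner (𝕜 := ℂ) (tendsto_const_nhds (x := (w : H)))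
      have h2 := hu.inner (𝕜 := ℂ) (tendsto_const_nhds (x := (d + δ) w))
      simp only [hsymm] at h1
      rw [tendsto_nhds_unique h1 h2, hz0]
    subst hy
    have h := le_of_tendsto_of_tendsto' hu.norm hPu.norm fun n => hid_le (u n)
    rwa [norm_zero, norm_le_zero_iff] at h
  refine ⟨fun α => ?_, ?_⟩
  · have hα : α ∈ closure (LinearMap.range (d + δ) : Set H) := by
      rw [← Submodule.topologicalClosure_coe, hdense]
      trivial
    obtain ⟨p, hp, hpα⟩ := mem_closure_iff_seq_limit.mp hα
    choose u hu using hp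
    have hPu : Tendsto (fun n => (d + δ) (u n)) atTop (nhds α) := by simpa only [hu] using hpα
    obtain ⟨a, ha⟩ := exists_tendsto_of_norm_le S.subtype (d + δ) hid_le u hPu
    obtain ⟨x, hx⟩ := exists_tendsto_of_norm_le d (d + δ) hd_le u hPu
    obtain ⟨y, hy⟩ := exists_tendsto_of_norm_le δ (d + δ) hδ_le u hPu
    exact ⟨a, a, x, y, ⟨u, ha, hx⟩, ⟨u, ha, hy⟩, tendsto_nhds_unique hPu (hx.add hy)⟩
  · rintro u v x y ⟨p, -, hp⟩ ⟨q, -, hq⟩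
    have h := hp.inner (𝕜 := ℂ) hq
    simp only [horth] at h
    exact tendsto_nhds_unique h tendsto_const_nhds
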